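/- Let p be an odd prime and m, n positive integers with d = gcd(m, n) such that n/d is odd. Set q = p^{2mn/d}, α = (q−1)/(p^n−1), β = (q−1)/(p^m+1). Then the number of pairs (i, j) of natural numbers with 0 ≤ iα ≤ jβ ≤ q−1 and C(jβ, iα) ≢ 0 (mod p) equals 2^{−n}·((p+1)^{n/d} + Σ_{i=1}^{(p−1)/2} ((2i+1)^{m/d} − (2i−1)^{m/d})(p−2i+1)^{n/d})^d + p^n + 1. -/

import Mathlib

/-!
Put `q = p ^ L` with `L = lcm (n, 2m)`. By Lucas' theorem, `C(jβ, iα)` is prime to `p` if and only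
if each of the `L` base-`p` digits of `iα` is at most the corresponding digit of `jβ`. For
`i < p ^ n` the digits of `iα` are those of `i` repeated with period `n`; for `j = b + 1` with
`b < p ^ m` the digits of `jβ` are those of `(b + 1)(p ^ m - 1)`, that is, `b` written above its
digitwise complement, repeated with period `2m`. As `n / d` is odd, `gcd (n, 2m) = d`, so by the
Chinese remainder theorem the condition says that `i_r ≤ min (b_s, p - 1 - b_s)` whenever
`r ≡ s mod d`.

The `d` residue classes are therefore independent. In one class the admissible digits of `i` are
those at most `(p - 1) / 2 - t`, where `t` is the largest distance of a digit of `b` from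
`(p - 1) / 2`, and summing over `t` gives the factor in the formula. The remaining values `j = 0`
and `j = p ^ m + 1` contribute `1` and `p ^ n` pairs.
-/

open Finset

/-- The `k`-th base-`p` digit of `x`, the units digit being the `0`-th. -/
def digit (p k x : ℕ) : ℕ := x / p ^ k % p

section Digit

variable {p m k x y : ℕ}

lemma digit_lt (hp : 0 < p) (k x : ℕ) : digit p k x < p := Nat.mod_lt _ hp

lemma digit_pow_mul_add_of_lt (hp : 0 < p) (hk : k < m) (x y : ℕ) :
    digit p k (p ^ m * x + y) = digit p k y := by
  obtain ⟨c, rfl⟩ := Nat.exists_eq_add_of_lt hk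
  have hpow : p ^ (k + c + 1) * x + y = p ^ k * (p * (p ^ c * x)) + y := by ring
  rw [digit, hpow, Nat.mul_add_div (by positivity), Nat.mul_add_mod, digit]

lemma digit_add_pow_mul_add (hy : y < p ^ m) (k x : ℕ) :
    digit p (m + k) (p ^ m * x + y) = digit p k x := by
  rw [digit, pow_add, ← Nat.div_div_eq_div_mul, Nat.mul_add_div (Nat.zero_lt_of_lt hy),
    Nat.div_eq_of_lt hy, add_zero, digit]

lemma digit_pow_sub_succ (hk : k < m) (hx : x < p ^ m) :
    digit p k (p ^ m - (x + 1)) = p - (digit p k x + 1) := by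
  obtain ⟨c, rfl⟩ := Nat.exists_eq_add_of_lt hk
  have hpow : p ^ (k + c + 1) = p ^ k * (p * p ^ c) := by ring
  rw [hpow] at hx ⊢
  rw [digit, Nat.mul_sub_div _ _ _ hx, Nat.mul_sub_mod (Nat.div_lt_of_lt_mul hx), digit]

lemma digit_mul_geom_sum {e : ℕ} (hx : x < p ^ m) (hk : k < m * e) :
    digit p k (x * ∑ i ∈ range e, (p ^ m) ^ i) = digit p (k % m) x := by
  have hp : 0 < p := by
    rcases p.eq_zero_or_pos with rfl | hp
    · have : m ≠ 0 := by rintro rfl; simp at hk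
      simp [this] at hx
    · exact hp
  induction e generalizing k with
  | zero => simp at hk
  | succ e ih =>
    have hshift : x * ∑ i ∈ range (e + 1), (p ^ m) ^ i
        = p ^ m * (x * ∑ i ∈ range e, (p ^ m) ^ i) + x := by
      rw [geom_sum_succ]; ring
    rw [hshift]
    rcases lt_or_ge k m with hkm | hmk
    · rw [digit_pow_mul_add_of_lt hp hkm, Nat.mod_eq_of_lt hkm]
    · obtain ⟨l, rfl⟩ := Nat.exists_eq_add_of_le hmk
      rw [digit_add_pow_mul_add hx, Nat.add_mod_left]
      exact ih (by rw [mul_add_one] at hk; omega)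

lemma digit_mul_pow_sub_one_div {L : ℕ} (hp : 1 < p) (hmL : m ∣ L) (hx : x < p ^ m) (hk : k < L) :
    digit p k (x * ((p ^ L - 1) / (p ^ m - 1))) = digit p (k % m) x := by
  obtain ⟨e, rfl⟩ := hmL
  have hm : m ≠ 0 := by rintro rfl; simp at hk
  rw [pow_mul, ← Nat.geomSum_eq (Nat.one_lt_pow hm hp), digit_mul_geom_sum hx hk]

lemma succ_mul_pow_sub_one (hx : x < p ^ m) :
    (x + 1) * (p ^ m - 1) = p ^ m * x + (p ^ m - (x + 1)) := by
  obtain ⟨c, hc⟩ := Nat.exists_eq_add_of_lt hx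
  rw [hc, show x + c + 1 - 1 = x + c by omega, show x + c + 1 - (x + 1) = c by omega]
  ring

lemma digit_succ_mul_pow_sub_one_of_lt (hk : k < m) (hx : x < p ^ m) :
    digit p k ((x + 1) * (p ^ m - 1)) = p - (digit p k x + 1) := by
  have hp : 0 < p := Nat.pos_of_ne_zero fun h ↦ by simp [h, (Nat.zero_lt_of_lt hk).ne'] at hx
  rw [succ_mul_pow_sub_one hx, digit_pow_mul_add_of_lt hp hk, digit_pow_sub_succ hk hx]

lemma digit_add_succ_mul_pow_sub_one (k : ℕ) (hx : x < p ^ m) :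
    digit p (m + k) ((x + 1) * (p ^ m - 1)) = digit p k x := by
  rw [succ_mul_pow_sub_one hx, digit_add_pow_mul_add (by omega)]

end Digit

section PowSubOne

variable {p m L : ℕ}

lemma pow_two_mul_sub_one (p m : ℕ) : p ^ (2 * m) - 1 = (p ^ m + 1) * (p ^ m - 1) := by
  rw [mul_comm 2, pow_mul, ← Nat.sq_sub_sq, one_pow]

lemma pow_add_one_dvd_pow_sub_one (h : 2 * m ∣ L) : p ^ m + 1 ∣ p ^ L - 1 :=
  (Dvd.intro _ (pow_two_mul_sub_one p m).symm).trans (Nat.pow_sub_one_dvd_pow_sub_one p h)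

lemma pow_sub_one_div_pow_add_one (h : 2 * m ∣ L) :
    (p ^ L - 1) / (p ^ m + 1) = (p ^ m - 1) * ((p ^ L - 1) / (p ^ (2 * m) - 1)) := by
  obtain ⟨c, hc⟩ := Nat.pow_sub_one_dvd_pow_sub_one p h
  rw [hc, pow_two_mul_sub_one]
  rcases (p ^ m - 1).eq_zero_or_pos with h0 | hpos
  · simp [h0]
  · rw [Nat.mul_div_cancel_left _ (by positivity), mul_assoc,
      Nat.mul_div_cancel_left _ (by positivity)]

end PowSubOne

section Choose

variable {p x y L : ℕ}

lemma le_of_not_dvd_choose (h : ¬ p ∣ x.choose y) : y ≤ x :=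
  Nat.choose_ne_zero_iff.1 fun h0 ↦ h (h0 ▸ dvd_zero p)

lemma not_dvd_choose_iff_forall_digit_le (hp : p.Prime) (hx : x < p ^ L) (hy : y < p ^ L) :
    ¬ p ∣ x.choose y ↔ ∀ k < L, digit p k y ≤ digit p k x := by
  have := Fact.mk hp
  rw [(Choose.choose_modEq_prod_range_choose_nat hx hy).dvd_iff dvd_rfl,
    hp.prime.dvd_finsetProd_iff]
  simp only [mem_range, not_exists, not_and]
  refine forall₂_congr fun k _ ↦ ⟨le_of_not_dvd_choose, fun h ↦ ?_⟩
  exact hp.coprime_iff_not_dvd.1 (hp.coprime_choose_of_lt (digit_lt hp.pos k x) h)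

lemma not_dvd_choose_pow_sub_one (hp : p.Prime) (hy : y < p ^ L) : ¬ p ∣ (p ^ L - 1).choose y := by
  rw [not_dvd_choose_iff_forall_digit_le hp (by omega) hy]
  intro k hk
  have htop : digit p k (p ^ L - 1) = p - 1 := by
    simpa [digit] using digit_pow_sub_succ (x := 0) hk (pow_pos hp.pos L)
  rw [htop]
  exact Nat.le_sub_one_of_lt (digit_lt hp.pos k y)

end Choose

lemma forall_lt_lcm_iff {a b : ℕ} (ha : a ≠ 0) (hb : b ≠ 0) (R : ℕ → ℕ → Prop) :
    (∀ k < a.lcm b, R (k % a) (k % b)) ↔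
      ∀ r < a, ∀ s < b, r ≡ s [MOD a.gcd b] → R r s := by
  constructor
  · intro h r hr s hs hrs
    obtain ⟨hkr, hks⟩ := (Nat.chineseRemainder' hrs).2
    have := h _ (Nat.chineseRemainder'_lt_lcm hrs ha hb)
    rwa [hkr, hks, Nat.mod_eq_of_lt hr, Nat.mod_eq_of_lt hs] at this
  · intro h k _
    refine h _ (Nat.mod_lt _ (by omega)) _ (Nat.mod_lt _ (by omega)) ?_
    exact ((Nat.mod_modEq k a).of_dvd (Nat.gcd_dvd_left a b)).trans
      ((Nat.mod_modEq k b).symm.of_dvd (Nat.gcd_dvd_right a b))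

lemma forall_lt_two_mul_iff {m : ℕ} {P : ℕ → Prop} :
    (∀ s < 2 * m, P s) ↔ ∀ s < m, P s ∧ P (m + s) := by
  refine ⟨fun h s hs ↦ ⟨h s (by omega), h (m + s) (by omega)⟩, fun h s hs ↦ ?_⟩
  rcases lt_or_ge s m with hsm | hms
  · exact (h s hsm).1
  · obtain ⟨t, rfl⟩ := Nat.exists_eq_add_of_le hms
    exact (h t (by omega)).2

lemma gcd_two_mul_of_odd_div {m n : ℕ} (h : Odd (n / m.gcd n)) : n.gcd (2 * m) = m.gcd n := by
  rcases (m.gcd n).eq_zero_or_pos with hg | hg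
  · simp [hg] at h
  have hcoprime : Nat.Coprime (n / m.gcd n) (2 * (m / m.gcd n)) :=
    .mul_right (Nat.coprime_two_right.2 h) (Nat.coprime_div_gcd_div_gcd hg).symm
  calc n.gcd (2 * m)
      = (m.gcd n * (n / m.gcd n)).gcd (m.gcd n * (2 * (m / m.gcd n))) := by
        rw [mul_left_comm, Nat.mul_div_cancel' (Nat.gcd_dvd_left m n),
          Nat.mul_div_cancel' (Nat.gcd_dvd_right m n)]
    _ = m.gcd n := by rw [Nat.gcd_mul_left, hcoprime.gcd_eq_one, mul_one]

lemma mul_div_le_of_dvd {a B c : ℕ} (hB : c ∣ B) (ha : a ≤ c) : a * (B / c) ≤ B :=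
  (Nat.mul_le_mul_right _ ha).trans_eq (Nat.mul_div_cancel' hB)

/-- Whenever `r ≡ s [MOD d]`, the `r`-th of the `n` digits of `i` is at most the `s`-th of the `m`
digits of `b` and at most its digit complement. This is the condition that Lucas' theorem imposes
on a pair `(i, b + 1)`. -/
abbrev DigitsLeMinRev (p n m d i b : ℕ) : Prop :=
  ∀ r < n, ∀ s < m, r ≡ s [MOD d] →
    digit p r i ≤ digit p s b ∧ digit p r i ≤ p - (digit p s b + 1)

lemma not_dvd_choose_mul_iff {p m n i b : ℕ} (hp : p.Prime) (hm : m ≠ 0) (hn : n ≠ 0)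
    (hgcd : n.gcd (2 * m) = m.gcd n) (hi : i < p ^ n) (hb : b < p ^ m) :
    ¬ p ∣ ((b + 1) * ((p ^ n.lcm (2 * m) - 1) / (p ^ m + 1))).choose
        (i * ((p ^ n.lcm (2 * m) - 1) / (p ^ n - 1))) ↔
      DigitsLeMinRev p n m (m.gcd n) i b := by
  set L := n.lcm (2 * m)
  have hnL : n ∣ L := Nat.dvd_lcm_left n (2 * m)
  have hmL : 2 * m ∣ L := Nat.dvd_lcm_right n (2 * m)
  have hL : 0 < p ^ L := pow_pos hp.pos L
  have hα : i * ((p ^ L - 1) / (p ^ n - 1)) ≤ p ^ L - 1 :=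
    mul_div_le_of_dvd (Nat.pow_sub_one_dvd_pow_sub_one p hnL) (by omega)
  have hβ : (b + 1) * ((p ^ L - 1) / (p ^ m + 1)) ≤ p ^ L - 1 :=
    mul_div_le_of_dvd (pow_add_one_dvd_pow_sub_one hmL) (by omega)
  have hx : (b + 1) * (p ^ m - 1) < p ^ (2 * m) := by
    rw [succ_mul_pow_sub_one hb, two_mul, pow_add]
    have := Nat.mul_le_mul_left (p ^ m) hb
    rw [Nat.mul_succ] at this
    omega
  have hperiodic : ∀ k < L,
      (digit p k (i * ((p ^ L - 1) / (p ^ n - 1)))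
          ≤ digit p k ((b + 1) * ((p ^ L - 1) / (p ^ m + 1))) ↔
        digit p (k % n) i ≤ digit p (k % (2 * m)) ((b + 1) * (p ^ m - 1))) := fun k hk ↦ by
    rw [pow_sub_one_div_pow_add_one hmL, ← mul_assoc,
      digit_mul_pow_sub_one_div hp.one_lt hnL hi hk, digit_mul_pow_sub_one_div hp.one_lt hmL hx hk]
  have hshift (r s : ℕ) : r ≡ m + s [MOD m.gcd n] ↔ r ≡ s [MOD m.gcd n] := by
    have : m + s ≡ s [MOD m.gcd n] := by
      simp [Nat.ModEq, Nat.add_mod, Nat.mod_eq_zero_of_dvd (Nat.gcd_dvd_left m n)]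
    exact ⟨(·.trans this), (·.trans this.symm)⟩
  rw [not_dvd_choose_iff_forall_digit_le (L := L) hp (by omega) (by omega), forall₂_congr hperiodic,
    forall_lt_lcm_iff hn (by omega)
      (fun r s ↦ digit p r i ≤ digit p s ((b + 1) * (p ^ m - 1))), hgcd]
  simp only [forall_lt_two_mul_iff, hshift, ← forall_and]
  refine forall₄_congr fun r _ s hs ↦ ?_
  rw [digit_succ_mul_pow_sub_one_of_lt hs hb, digit_add_succ_mul_pow_sub_one s hb]
  tauto

lemma card_filter_product_range_add_two {α : Type*} (S : Finset α) (B : ℕ) (P : α → ℕ → Prop)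
    [∀ i j, Decidable (P i j)] :
    #{ij ∈ S ×ˢ range (B + 2) | P ij.1 ij.2} =
      #{i ∈ S | P i 0} + #{ij ∈ S ×ˢ range B | P ij.1 (ij.2 + 1)} + #{i ∈ S | P i (B + 1)} := by
  simp only [card_filter, sum_product_right, sum_range_succ, sum_range_succ' _ B]
  ring

/-- The pairs of families all of whose entries are related by `R`. -/
def relatedFamilies {α β : Type*} (R : α → β → Prop) (ι κ : Type*) : Set ((ι → α) × (κ → β)) :=
  {f | ∀ r s, R (f.1 r) (f.2 s)}

lemma card_related_fiberwise {α β ι κ γ : Type*} [Fintype γ] (R : α → β → Prop)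
    (u : ι → γ) (v : κ → γ) :
    Nat.card {f : (ι → α) × (κ → β) // ∀ r s, u r = v s → R (f.1 r) (f.2 s)} =
      ∏ c, Nat.card (relatedFamilies R {r // u r = c} {s // v s = c}) := by
  rw [← Nat.card_pi]
  exact Nat.card_congr
    { toFun := fun f c ↦ ⟨(fun r ↦ f.1.1 r, fun s ↦ f.1.2 s),
        fun r s ↦ f.2 r s (r.2.trans s.2.symm)⟩
      invFun := fun g ↦ ⟨(fun r ↦ (g (u r)).1.1 ⟨r, rfl⟩, fun s ↦ (g (v s)).1.2 ⟨s, rfl⟩),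
        fun r s h ↦ by
          have hv (c : γ) (hs : v s = c) : (g c).1.2 ⟨s, hs⟩ = (g (v s)).1.2 ⟨s, rfl⟩ := by
            subst hs; rfl
          exact hv (u r) h.symm ▸ (g (u r)).2 ⟨r, rfl⟩ ⟨s, h.symm⟩⟩
      left_inv := fun f ↦ rfl
      right_inv := fun g ↦ by
        funext c
        ext ⟨r, rfl⟩ <;> rfl }

/-- `x` lies below both `y` and its digit complement `p - 1 - y`. -/
def LeMinRev {p : ℕ} (x y : Fin p) : Prop := x ≤ min y y.rev

section Radius

variable {ι κ : Type*} [Fintype κ] {h t : ℕ}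

/-- The sup-distance of a family of digits in base `2 * h + 1` from the middle digit `h`. -/
def radius (b : κ → Fin (2 * h + 1)) : ℕ := univ.sup fun s ↦ Nat.dist (b s) h

lemma radius_le_iff {b : κ → Fin (2 * h + 1)} : radius b ≤ t ↔ ∀ s, Nat.dist (b s) h ≤ t := by
  simp [radius]

lemma radius_le (b : κ → Fin (2 * h + 1)) : radius b ≤ h :=
  radius_le_iff.2 fun s ↦ by unfold Nat.dist; omega

lemma mem_relatedFamilies_leMinRev_iff [Nonempty κ] {a : ι → Fin (2 * h + 1)}
    {b : κ → Fin (2 * h + 1)} :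
    (a, b) ∈ relatedFamilies LeMinRev ι κ ↔ ∀ r, (a r : ℕ) ≤ h - radius b := by
  have hR (x y : Fin (2 * h + 1)) : LeMinRev x y ↔ x ≤ h ∧ Nat.dist y h ≤ h - x := by
    simp only [LeMinRev, le_min_iff, Fin.le_def, Fin.val_rev, Nat.dist]
    omega
  have hle := radius_le b
  refine forall_congr' fun r ↦ ?_
  simp only [hR, forall_and, forall_const, ← radius_le_iff]
  omega

lemma card_radius_le [DecidableEq κ] (ht : t ≤ h) :
    #{b : κ → Fin (2 * h + 1) | radius b ≤ t} = (2 * t + 1) ^ Fintype.card κ := by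
  have hball : #{x : Fin (2 * h + 1) | Nat.dist x h ≤ t} = 2 * t + 1 := by
    have himage : ({x : Fin (2 * h + 1) | Nat.dist x h ≤ t} : Finset _)
        = Icc ⟨h - t, by omega⟩ ⟨h + t, by omega⟩ := by
      ext x
      rw [mem_filter_univ, mem_Icc, Fin.le_def, Fin.le_def, Nat.dist]
      dsimp only
      omega
    rw [himage, Fin.card_Icc]
    simp only
    omega
  have hpi : ({b : κ → Fin (2 * h + 1) | radius b ≤ t} : Finset _)
      = Fintype.piFinset fun _ ↦ {x : Fin (2 * h + 1) | Nat.dist x h ≤ t} := by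
    ext b
    simp [radius_le_iff]
  rw [hpi, Fintype.card_piFinset, prod_const, hball, card_univ]

lemma card_radius_eq [DecidableEq κ] (ht0 : 0 < t) (ht : t ≤ h) :
    #{b : κ → Fin (2 * h + 1) | radius b = t} =
      (2 * t + 1) ^ Fintype.card κ - (2 * t - 1) ^ Fintype.card κ := by
  have hpred : 2 * t - 1 = 2 * (t - 1) + 1 := by omega
  rw [hpred, ← card_radius_le ht, ← card_radius_le (by omega : t - 1 ≤ h),
    ← card_sdiff_of_subset (monotone_filter_right _ fun b _ hb ↦ by omega)]
  congr 1
  ext b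
  simp only [mem_filter_univ, mem_sdiff]
  omega

lemma card_relatedFamilies_leMinRev [Fintype ι] [DecidableEq κ] [Nonempty κ] :
    Nat.card (relatedFamilies (LeMinRev (p := 2 * h + 1)) ι κ) =
      ∑ b : κ → Fin (2 * h + 1), (h - radius b + 1) ^ Fintype.card ι := by
  have e : relatedFamilies (LeMinRev (p := 2 * h + 1)) ι κ ≃
      (b : κ → Fin (2 * h + 1)) × (ι → {x : Fin (2 * h + 1) // (x : ℕ) ≤ h - radius b}) :=
    { toFun := fun f ↦ ⟨f.1.2, fun r ↦ ⟨f.1.1 r, mem_relatedFamilies_leMinRev_iff.1 f.2 r⟩⟩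
      invFun := fun g ↦ ⟨(fun r ↦ g.2 r, g.1),
        mem_relatedFamilies_leMinRev_iff.2 fun r ↦ (g.2 r).2⟩
      left_inv := fun f ↦ rfl
      right_inv := fun g ↦ rfl }
  have hcard (j : ℕ) (hj : j ≤ h) : Nat.card {x : Fin (2 * h + 1) // (x : ℕ) ≤ j} = j + 1 := by
    rw [Nat.card_eq_fintype_card,
      Fintype.card_of_subtype (Iic ⟨j, by omega⟩) (by simp [Fin.le_def]), Fin.card_Iic]
  rw [Nat.card_congr e, Nat.card_sigma]
  simp only [Nat.card_fun, hcard _ (Nat.sub_le h _), Nat.card_eq_fintype_card]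

lemma two_pow_mul_card_relatedFamilies_leMinRev [Fintype ι] [Nonempty κ] (h : ℕ) :
    2 ^ Fintype.card ι * Nat.card (relatedFamilies (LeMinRev (p := 2 * h + 1)) ι κ) =
      (2 * h + 2) ^ Fintype.card ι + ∑ i ∈ Icc 1 h,
        ((2 * i + 1) ^ Fintype.card κ - (2 * i - 1) ^ Fintype.card κ) *
          (2 * h + 1 - 2 * i + 1) ^ Fintype.card ι := by
  classical
  have hdouble {t : ℕ} (ht : t ≤ h) : 2 * (h - t + 1) = 2 * h + 1 - 2 * t + 1 := by omega
  have hcenter : #{b : κ → Fin (2 * h + 1) | radius b = 0} = 1 := by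
    simpa using card_radius_le (κ := κ) h.zero_le
  calc
    _ = ∑ b : κ → Fin (2 * h + 1), (2 * h + 1 - 2 * radius b + 1) ^ Fintype.card ι := by
      simp only [card_relatedFamilies_leMinRev, mul_sum, ← mul_pow, hdouble (radius_le _)]
    _ = ∑ t ∈ range (h + 1), #{b : κ → Fin (2 * h + 1) | radius b = t} *
          (2 * h + 1 - 2 * t + 1) ^ Fintype.card ι := by
      rw [← sum_fiberwise_of_maps_to' (t := range (h + 1)) (g := radius)
        (fun b _ ↦ mem_range_succ_iff.2 (radius_le b))
        fun t ↦ (2 * h + 1 - 2 * t + 1) ^ Fintype.card ι]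
      simp only [sum_const, smul_eq_mul]
    _ = _ := by
      rw [range_eq_Ico, sum_eq_sum_Ico_succ_bot (by omega), hcenter, one_mul]
      congr 1
      refine sum_congr rfl fun t ht ↦ ?_
      rw [mem_Icc] at ht
      rw [card_radius_eq (by omega) (by omega)]

end Radius

lemma card_fiber_natCast_zmod {d n : ℕ} [NeZero d] (hdn : d ∣ n) (c : ZMod d) :
    Fintype.card {r : Fin n // ((r : ℕ) : ZMod d) = c} = n / d := by
  have hiff (r : Fin n) : ((r : ℕ) : ZMod d) = c ↔ r ≡ c.val [MOD d] := by
    rw [← ZMod.natCast_eq_natCast_iff, ZMod.natCast_zmod_val]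
  rw [Fintype.card_subtype]
  simp only [hiff]
  rw [card_filter, ← sum_range fun r ↦ if r ≡ c.val [MOD d] then 1 else 0, ← card_filter,
    ← Nat.count_eq_card_filter_range, Nat.count_modEq_card n (NeZero.pos d),
    Nat.mod_eq_zero_of_dvd hdn, if_neg (Nat.not_lt_zero _), add_zero]

lemma card_filter_digitsLeMinRev (p n m d : ℕ) :
    #{ib ∈ range (p ^ n) ×ˢ range (p ^ m) | DigitsLeMinRev p n m d ib.1 ib.2} =
      Nat.card {f : (Fin n → Fin p) × (Fin m → Fin p) //
        ∀ (r : Fin n) (s : Fin m), ((r : ℕ) : ZMod d) = (s : ℕ) → LeMinRev (f.1 r) (f.2 s)} := by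
  have hdigit {k : ℕ} (i : Fin (p ^ k)) (r : Fin k) :
      (finFunctionFinEquiv.symm i r : ℕ) = digit p r i := rfl
  have hrel (x y : Fin p) :
      LeMinRev x y ↔ (x : ℕ) ≤ y ∧ (x : ℕ) ≤ p - (y + 1) := by
    simp only [LeMinRev, le_min_iff, Fin.le_def, Fin.val_rev]
  have hdigits (i : Fin (p ^ n)) (b : Fin (p ^ m)) :
      DigitsLeMinRev p n m d i b ↔ ∀ (r : Fin n) (s : Fin m), ((r : ℕ) : ZMod d) = (s : ℕ) →
        LeMinRev (finFunctionFinEquiv.symm i r) (finFunctionFinEquiv.symm b s) := by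
    simp only [DigitsLeMinRev, Fin.forall_iff, ZMod.natCast_eq_natCast_iff, hrel, hdigit]
  rw [← Nat.card_congr ((finFunctionFinEquiv.symm.prodCongr finFunctionFinEquiv.symm).subtypeEquiv
      fun x : Fin (p ^ n) × Fin (p ^ m) ↦ hdigits x.1 x.2), Nat.card_eq_fintype_card,
    Fintype.card_subtype]
  simp only [card_filter, sum_product, Fintype.sum_prod_type, sum_range]

lemma two_pow_mul_card_filter_digitsLeMinRev {h n m d : ℕ} (hd : d ≠ 0) (hm : m ≠ 0) (hdn : d ∣ n)
    (hdm : d ∣ m) :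
    2 ^ n * #{ib ∈ range ((2 * h + 1) ^ n) ×ˢ range ((2 * h + 1) ^ m) |
        DigitsLeMinRev (2 * h + 1) n m d ib.1 ib.2} =
      ((2 * h + 2) ^ (n / d) + ∑ i ∈ Icc 1 h,
        ((2 * i + 1) ^ (m / d) - (2 * i - 1) ^ (m / d)) *
          (2 * h + 1 - 2 * i + 1) ^ (n / d)) ^ d := by
  have : NeZero d := ⟨hd⟩
  have hfiber (c : ZMod d) : Nonempty {s : Fin m // ((s : ℕ) : ZMod d) = c} := by
    rw [← Fintype.card_pos_iff, card_fiber_natCast_zmod hdm]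
    exact Nat.div_pos (Nat.le_of_dvd (Nat.pos_of_ne_zero hm) hdm) (NeZero.pos d)
  have hpow : 2 ^ n = ∏ _c : ZMod d, 2 ^ (n / d) := by
    rw [prod_const, card_univ, ZMod.card, ← pow_mul, Nat.div_mul_cancel hdn]
  rw [card_filter_digitsLeMinRev,
    card_related_fiberwise LeMinRev (fun r : Fin n ↦ ((r : ℕ) : ZMod d))
      (fun s : Fin m ↦ ((s : ℕ) : ZMod d)), hpow, ← prod_mul_distrib]
  have hfactor (c : ZMod d) := two_pow_mul_card_relatedFamilies_leMinRev
    (ι := {r : Fin n // ((r : ℕ) : ZMod d) = c}) (κ := {s : Fin m // ((s : ℕ) : ZMod d) = c}) h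
  simp only [card_fiber_natCast_zmod hdn, card_fiber_natCast_zmod hdm] at hfactor
  rw [prod_congr rfl fun c _ ↦ hfactor c, prod_const, card_univ, ZMod.card]

lemma filter_choose_mul_eq {p q A B α β : ℕ} (hα : A * α = q - 1) (hβ : B * β = q - 1)
    (hq : 1 < q) :
    {ij ∈ range q ×ˢ range q | ij.1 * α ≤ ij.2 * β ∧ ij.2 * β ≤ q - 1 ∧
      ¬ p ∣ (ij.2 * β).choose (ij.1 * α)} =
    {ij ∈ range (A + 1) ×ˢ range (B + 1) | ¬ p ∣ (ij.2 * β).choose (ij.1 * α)} := by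
  have hα0 : 0 < α := Nat.pos_of_ne_zero fun h ↦ by subst h; omega
  have hβ0 : 0 < β := Nat.pos_of_ne_zero fun h ↦ by subst h; omega
  have hA : A ≤ q - 1 := hα ▸ Nat.le_mul_of_pos_right A hα0
  have hB : B ≤ q - 1 := hβ ▸ Nat.le_mul_of_pos_right B hβ0
  ext ⟨i, j⟩
  simp only [mem_filter, mem_product, mem_range, Nat.lt_succ_iff]
  constructor
  · rintro ⟨-, hij, hj, hdvd⟩
    exact ⟨⟨Nat.le_of_mul_le_mul_right (hα ▸ hij.trans hj) hα0,
      Nat.le_of_mul_le_mul_right (hβ ▸ hj) hβ0⟩, hdvd⟩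
  · rintro ⟨⟨hi, hj⟩, hdvd⟩
    exact ⟨⟨by omega, by omega⟩, le_of_not_dvd_choose hdvd, hβ ▸ Nat.mul_le_mul_right β hj, hdvd⟩

lemma card_not_dvd_zero_choose_mul {p N α : ℕ} (hp : p ≠ 1) (hN : 0 < N) (hα : 0 < α) :
    #{i ∈ range N | ¬ p ∣ Nat.choose 0 (i * α)} = 1 := by
  refine card_eq_one.2 ⟨0, ext fun i ↦ ?_⟩
  rw [mem_filter, mem_range, mem_singleton]
  refine ⟨fun hi ↦ ?_, ?_⟩
  · simpa [hα.ne'] using le_of_not_dvd_choose hi.2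
  · rintro rfl
    simpa using ⟨hN, hp⟩

lemma card_not_dvd_choose_mul {p m n α β : ℕ} (hp : p.Prime) (hm : m ≠ 0) (hn : n ≠ 0)
    (hgcd : n.gcd (2 * m) = m.gcd n) (hα : α = (p ^ n.lcm (2 * m) - 1) / (p ^ n - 1))
    (hβ : β = (p ^ n.lcm (2 * m) - 1) / (p ^ m + 1)) :
    #{ij ∈ range (p ^ n) ×ˢ range (p ^ m + 2) | ¬ p ∣ (ij.2 * β).choose (ij.1 * α)} =
      #{ib ∈ range (p ^ n) ×ˢ range (p ^ m) | DigitsLeMinRev p n m (m.gcd n) ib.1 ib.2} +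
        (p ^ n + 1) := by
  have hmL : 2 * m ∣ n.lcm (2 * m) := Nat.dvd_lcm_right n (2 * m)
  have hpL : 0 < p ^ n.lcm (2 * m) := pow_pos hp.pos _
  have hdvd : p ^ n - 1 ∣ p ^ n.lcm (2 * m) - 1 :=
    Nat.pow_sub_one_dvd_pow_sub_one p (Nat.dvd_lcm_left n (2 * m))
  have hα0 : 0 < α := by
    have hL : n.lcm (2 * m) ≠ 0 := Nat.lcm_ne_zero hn (by omega)
    rw [hα]
    exact Nat.div_pos
      (Nat.le_of_dvd (Nat.sub_pos_of_lt (Nat.one_lt_pow hL hp.one_lt)) hdvd)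
      (Nat.sub_pos_of_lt (Nat.one_lt_pow hn hp.one_lt))
  have hbottom : #{i ∈ range (p ^ n) | ¬ p ∣ (0 * β).choose (i * α)} = 1 := by
    rw [zero_mul, card_not_dvd_zero_choose_mul hp.ne_one (pow_pos hp.pos n) hα0]
  have htop : {i ∈ range (p ^ n) | ¬ p ∣ ((p ^ m + 1) * β).choose (i * α)} = range (p ^ n) := by
    refine filter_true_of_mem fun i hi ↦ ?_
    rw [mem_range] at hi
    have hle : i * α ≤ p ^ n.lcm (2 * m) - 1 := hα ▸ mul_div_le_of_dvd hdvd (by omega)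
    rw [hβ, Nat.mul_div_cancel' (pow_add_one_dvd_pow_sub_one hmL)]
    exact not_dvd_choose_pow_sub_one hp (by omega)
  have hmiddle :
      {ib ∈ range (p ^ n) ×ˢ range (p ^ m) | ¬ p ∣ ((ib.2 + 1) * β).choose (ib.1 * α)} =
        {ib ∈ range (p ^ n) ×ˢ range (p ^ m) | DigitsLeMinRev p n m (m.gcd n) ib.1 ib.2} := by
    refine filter_congr fun ib hib ↦ ?_
    rw [mem_product, mem_range, mem_range] at hib
    rw [hα, hβ]
    exact not_dvd_choose_mul_iff hp hm hn hgcd hib.1 hib.2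
  rw [card_filter_product_range_add_two (range (p ^ n)) (p ^ m)
    fun i j ↦ ¬ p ∣ (j * β).choose (i * α), hbottom, hmiddle, htop, card_range]
  ring

/-- Theorem 4.8 (ii), counting part, `p` odd and `n/d` odd: with `d = gcd(m,n)`,
`q = p^(2mn/d)`, `α = (q−1)/(pⁿ−1)`, `β = (q−1)/(pᵐ+1)`, the number of pairs `(i, j)`
with `iα ≤ jβ ≤ q−1` and `p ∤ C(jβ, iα)` equals
`2^(−n)((p+1)^(n/d) + Σ_{i=1}^{(p−1)/2} ((2i+1)^(m/d) − (2i−1)^(m/d))(p−2i+1)^(n/d))^d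
  + pⁿ + 1` (stated here multiplied through by `2^n`). -/
theorem stmt_17 (p m n : ℕ) (hp : p.Prime) (hodd : Odd p) (hm : 0 < m) (hn : 0 < n)
    (d q α β : ℕ) (hd : d = Nat.gcd m n) (hndodd : Odd (n / d))
    (hq : q = p ^ (2 * m * n / d))
    (hα : α = (q - 1) / (p ^ n - 1)) (hβ : β = (q - 1) / (p ^ m + 1)) :
    2 ^ n * ((Finset.range q ×ˢ Finset.range q).filter
      (fun ij : ℕ × ℕ => ij.1 * α ≤ ij.2 * β ∧ ij.2 * β ≤ q - 1 ∧
        ¬ p ∣ Nat.choose (ij.2 * β) (ij.1 * α))).card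
    = ((p + 1) ^ (n / d) + ∑ i ∈ Finset.Icc 1 ((p - 1) / 2),
        ((2 * i + 1) ^ (m / d) - (2 * i - 1) ^ (m / d)) * (p - 2 * i + 1) ^ (n / d)) ^ d
      + 2 ^ n * (p ^ n + 1) := by
  obtain ⟨h, rfl⟩ := hodd
  subst hd
  have hgcd : n.gcd (2 * m) = m.gcd n := gcd_two_mul_of_odd_div hndodd
  have hlcm : 2 * m * n / m.gcd n = n.lcm (2 * m) := by rw [Nat.lcm, hgcd, mul_comm n]
  rw [hlcm] at hq
  have hα_mul : ((2 * h + 1) ^ n - 1) * α = q - 1 := by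
    rw [hα, hq, Nat.mul_div_cancel' (Nat.pow_sub_one_dvd_pow_sub_one _ (Nat.dvd_lcm_left n _))]
  have hβ_mul : ((2 * h + 1) ^ m + 1) * β = q - 1 := by
    rw [hβ, hq, Nat.mul_div_cancel' (pow_add_one_dvd_pow_sub_one (Nat.dvd_lcm_right n _))]
  have hq1 : 1 < q := hq ▸ Nat.one_lt_pow (Nat.lcm_ne_zero hn.ne' (by omega)) hp.one_lt
  have hpn : (2 * h + 1) ^ n - 1 + 1 = (2 * h + 1) ^ n := Nat.sub_add_cancel (pow_pos hp.pos n)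
  rw [filter_choose_mul_eq hα_mul hβ_mul hq1, hpn,
    card_not_dvd_choose_mul hp hm.ne' hn.ne' hgcd (hq ▸ hα) (hq ▸ hβ), mul_add,
    two_pow_mul_card_filter_digitsLeMinRev (Nat.gcd_pos_of_pos_left n hm).ne' hm.ne'
      (Nat.gcd_dvd_right m n) (Nat.gcd_dvd_left m n),
    Nat.add_sub_cancel, Nat.mul_div_cancel_left h two_pos]
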